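/- Let Ω ⊆ ℝ³ be open and let α(x) = α₁(x₁)e₁ + α₂(x₂)e₂ + α₃(x₃)e₃ with α₁, α₂, α₃ : ℝ → ℂ continuously differentiable, and set w_k := Dα^{(k)} − α² (k = 0,1,2,3). Given f = f₀ + f₁e₁ + f₂e₂ + f₃e₃ : Ω → ℍ(ℂ), suppose u₀, u₁, u₂, u₃ : Ω → ℂ are twice differentiable scalar functions satisfying −Δu_k + w_k u_k = f_k on Ω. Then the function g := (D + M^α)u = Du + uα, where u = u₀ + u₁e₁ + u₂e₂ + u₃e₃, solves the inhomogeneous equation Dg − gα = f on Ω. -/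

import Mathlib

noncomputable section

abbrev HC := Quaternion ℂ

def e1 : HC := ⟨0, 1, 0, 0⟩
def e2 : HC := ⟨0, 0, 1, 0⟩
def e3 : HC := ⟨0, 0, 0, 1⟩

def pd (k : Fin 3) (g : (Fin 3 → ℝ) → ℂ) (x : Fin 3 → ℝ) : ℂ :=
  fderiv ℝ g x (Pi.single k 1)

def lap (g : (Fin 3 → ℝ) → ℂ) (x : Fin 3 → ℝ) : ℂ :=
  pd 0 (pd 0 g) x + pd 1 (pd 1 g) x + pd 2 (pd 2 g) x

def pdq (k : Fin 3) (f : (Fin 3 → ℝ) → HC) (x : Fin 3 → ℝ) : HC :=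
  ⟨pd k (fun y => (f y).re) x, pd k (fun y => (f y).imI) x,
   pd k (fun y => (f y).imJ) x, pd k (fun y => (f y).imK) x⟩

def Dq (f : (Fin 3 → ℝ) → HC) (x : Fin 3 → ℝ) : HC :=
  e1 * pdq 0 f x + e2 * pdq 1 f x + e3 * pdq 2 f x

def lapq (f : (Fin 3 → ℝ) → HC) (x : Fin 3 → ℝ) : HC :=
  ⟨lap (fun y => (f y).re) x, lap (fun y => (f y).imI) x,
   lap (fun y => (f y).imJ) x, lap (fun y => (f y).imK) x⟩

def QDiffOn (f : (Fin 3 → ℝ) → HC) (Ω : Set (Fin 3 → ℝ)) : Prop :=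
  DifferentiableOn ℝ (fun y => (f y).re) Ω ∧ DifferentiableOn ℝ (fun y => (f y).imI) Ω ∧
  DifferentiableOn ℝ (fun y => (f y).imJ) Ω ∧ DifferentiableOn ℝ (fun y => (f y).imK) Ω

def QC2On (f : (Fin 3 → ℝ) → HC) (Ω : Set (Fin 3 → ℝ)) : Prop :=
  ContDiffOn ℝ 2 (fun y => (f y).re) Ω ∧ ContDiffOn ℝ 2 (fun y => (f y).imI) Ω ∧
  ContDiffOn ℝ 2 (fun y => (f y).imJ) Ω ∧ ContDiffOn ℝ 2 (fun y => (f y).imK) Ω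


/-- Build a biquaternion from its four complex components. -/
def quat (a b c d : ℂ) : HC := ⟨a, b, c, d⟩

/-- The diagonal purely vectorial function `α(x) = α₁(x₁)e₁ + α₂(x₂)e₂ + α₃(x₃)e₃`. -/
def dal (a1 a2 a3 : ℝ → ℂ) (x : Fin 3 → ℝ) : HC :=
  quat 0 (a1 (x 0)) (a2 (x 1)) (a3 (x 2))

/-- `s = α₁² + α₂² + α₃²` (so that `α² = −s`). -/
def sq3 (a1 a2 a3 : ℝ → ℂ) (x : Fin 3 → ℝ) : ℂ :=
  a1 (x 0) ^ 2 + a2 (x 1) ^ 2 + a3 (x 2) ^ 2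

/-- The scalar potentials `v_k = −Dα^{(k)} − α²`, written explicitly. -/
def vpot (a1 a2 a3 : ℝ → ℂ) : Fin 4 → (Fin 3 → ℝ) → ℂ :=
  ![fun x => deriv a1 (x 0) + deriv a2 (x 1) + deriv a3 (x 2) + sq3 a1 a2 a3 x,
    fun x => deriv a1 (x 0) - deriv a2 (x 1) - deriv a3 (x 2) + sq3 a1 a2 a3 x,
    fun x => -deriv a1 (x 0) + deriv a2 (x 1) - deriv a3 (x 2) + sq3 a1 a2 a3 x,
    fun x => -deriv a1 (x 0) - deriv a2 (x 1) + deriv a3 (x 2) + sq3 a1 a2 a3 x]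

/-- The scalar potentials `w_k = Dα^{(k)} − α²`, written explicitly. -/
def wpot (a1 a2 a3 : ℝ → ℂ) : Fin 4 → (Fin 3 → ℝ) → ℂ :=
  ![fun x => -(deriv a1 (x 0) + deriv a2 (x 1) + deriv a3 (x 2)) + sq3 a1 a2 a3 x,
    fun x => -deriv a1 (x 0) + deriv a2 (x 1) + deriv a3 (x 2) + sq3 a1 a2 a3 x,
    fun x => deriv a1 (x 0) - deriv a2 (x 1) + deriv a3 (x 2) + sq3 a1 a2 a3 x,
    fun x => deriv a1 (x 0) + deriv a2 (x 1) - deriv a3 (x 2) + sq3 a1 a2 a3 x]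

/-- The `k`-th complex component of a biquaternion. -/
def qc (k : Fin 4) (q : HC) : ℂ := ![q.re, q.imI, q.imJ, q.imK] k

/-! `D² = -Δ`, and for any differentiable `β` the terms `(Du)β` of `D(uβ)` and of `(Du + uβ)β` cancel,
so `(D - M^β)(D + M^β)u = -Δu + ∑ₖ eₖ u (∂ₖβ) - uβ²`. For `β = α` diagonal, `∂ₖα = αₖ' eₖ` and
`α²` is a scalar; since `q ↦ eₖ q eₖ` only changes signs of components, the right-hand side
decouples into the four Schrödinger operators. -/

open Topology
open scoped Quaternion

attribute [simps] e1 e2 e3 quat pdq lapq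

/-- Twice Fréchet differentiability at a point. Differentiability near `x` is part of the notion:
where `f` is not differentiable, `fderiv 𝕜 f` takes the junk value `0`. -/
structure TwiceDifferentiableAt (𝕜 : Type*) [NontriviallyNormedField 𝕜]
    {E F : Type*} [NormedAddCommGroup E] [NormedSpace 𝕜 E]
    [NormedAddCommGroup F] [NormedSpace 𝕜 F] (f : E → F) (x : E) : Prop where
  eventually_differentiableAt : ∀ᶠ y in 𝓝 x, DifferentiableAt 𝕜 f y
  differentiableAt_fderiv : DifferentiableAt 𝕜 (fderiv 𝕜 f) x

namespace TwiceDifferentiableAt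

variable {𝕜 E F : Type*} [NontriviallyNormedField 𝕜] [NormedAddCommGroup E] [NormedSpace 𝕜 E]
  [NormedAddCommGroup F] [NormedSpace 𝕜 F] {f : E → F} {x : E}

theorem of_contDiffAt (hf : ContDiffAt 𝕜 2 f x) : TwiceDifferentiableAt 𝕜 f x where
  eventually_differentiableAt :=
    (hf.eventually (by simp)).mono fun _ hy => hy.differentiableAt two_ne_zero
  differentiableAt_fderiv :=
    (hf.fderiv_right (m := 1) (by norm_num)).differentiableAt one_ne_zero

theorem differentiableAt (hf : TwiceDifferentiableAt 𝕜 f x) : DifferentiableAt 𝕜 f x :=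
  hf.eventually_differentiableAt.self_of_nhds

theorem isSymmSndFDerivAt [IsRCLikeNormedField 𝕜] (hf : TwiceDifferentiableAt 𝕜 f x) :
    IsSymmSndFDerivAt 𝕜 f x :=
  second_derivative_symmetric_of_eventually
    (hf.eventually_differentiableAt.mono fun _ hy => hy.hasFDerivAt)
    hf.differentiableAt_fderiv.hasFDerivAt

end TwiceDifferentiableAt

theorem differentiableAt_comp_apply {ι F : Type*} [Finite ι] [NormedAddCommGroup F]
    [NormedSpace ℝ F] {a : ℝ → F} {x : ι → ℝ} (j : ι) (ha : DifferentiableAt ℝ a (x j)) :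
    DifferentiableAt ℝ (fun y : ι → ℝ => a (y j)) x :=
  have := Fintype.ofFinite ι
  ha.comp x (differentiableAt_apply j x)

section PartialDerivatives

variable {f g : (Fin 3 → ℝ) → ℂ} {x : Fin 3 → ℝ} (j k : Fin 3)

theorem pd_add (hf : DifferentiableAt ℝ f x) (hg : DifferentiableAt ℝ g x) :
    pd k (fun y => f y + g y) x = pd k f x + pd k g x := by
  simp [pd, fderiv_fun_add hf hg]

theorem pd_sub (hf : DifferentiableAt ℝ f x) (hg : DifferentiableAt ℝ g x) :
    pd k (fun y => f y - g y) x = pd k f x - pd k g x := by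
  simp [pd, fderiv_fun_sub hf hg]

theorem pd_mul (hf : DifferentiableAt ℝ f x) (hg : DifferentiableAt ℝ g x) :
    pd k (fun y => f y * g y) x = pd k f x * g x + f x * pd k g x := by
  simp only [pd, fderiv_fun_mul hf hg, add_apply, smul_apply, smul_eq_mul]
  ring

theorem pd_const (c : ℂ) : pd k (fun _ => c) x = 0 := by
  simp [pd]

theorem pd_comp_apply {a : ℝ → ℂ} (ha : DifferentiableAt ℝ a (x j)) :
    pd k (fun y => a (y j)) x = if j = k then deriv a (x j) else 0 := by
  have hcomp := ha.hasDerivAt.hasFDerivAt.comp (f := fun y : Fin 3 → ℝ => y j) x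
    (hasFDerivAt_apply j x)
  rw [pd, ← Function.comp_def a, hcomp.fderiv]
  simp [Pi.single_apply]

theorem differentiableAt_pd (hf : TwiceDifferentiableAt ℝ f x) :
    DifferentiableAt ℝ (pd k f) x :=
  hf.differentiableAt_fderiv.clm_apply (differentiableAt_const _)

theorem pd_pd (hf : TwiceDifferentiableAt ℝ f x) :
    pd j (pd k f) x = fderiv ℝ (fderiv ℝ f) x (Pi.single j 1) (Pi.single k 1) := by
  change fderiv ℝ (fun y => fderiv ℝ f y (Pi.single k 1)) x (Pi.single j 1) = _
  simp [fderiv_clm_apply hf.differentiableAt_fderiv (differentiableAt_const _)]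

theorem pd_pd_comm (hf : TwiceDifferentiableAt ℝ f x) : pd j (pd k f) x = pd k (pd j f) x := by
  rw [pd_pd j k hf, pd_pd k j hf, hf.isSymmSndFDerivAt]

end PartialDerivatives

section Units

variable (q : HC)

theorem e1_mul_e1_mul : e1 * (e1 * q) = -q := by ext <;> simp

theorem e2_mul_e2_mul : e2 * (e2 * q) = -q := by ext <;> simp

theorem e3_mul_e3_mul : e3 * (e3 * q) = -q := by ext <;> simp

theorem e2_mul_e1_mul : e2 * (e1 * q) = -(e1 * (e2 * q)) := by ext <;> simp

theorem e3_mul_e1_mul : e3 * (e1 * q) = -(e1 * (e3 * q)) := by ext <;> simp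

theorem e3_mul_e2_mul : e3 * (e2 * q) = -(e2 * (e3 * q)) := by ext <;> simp

end Units

/-- Differentiability of a biquaternion-valued function at a point, expressed componentwise because
`Quaternion ℂ` carries no norm in the library. -/
structure QDiffAt (f : (Fin 3 → ℝ) → HC) (x : Fin 3 → ℝ) : Prop where
  re : DifferentiableAt ℝ (fun y => (f y).re) x
  imI : DifferentiableAt ℝ (fun y => (f y).imI) x
  imJ : DifferentiableAt ℝ (fun y => (f y).imJ) x
  imK : DifferentiableAt ℝ (fun y => (f y).imK) x

/-- Componentwise twice differentiability of a biquaternion-valued function at a point. -/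
structure QTwiceDiffAt (f : (Fin 3 → ℝ) → HC) (x : Fin 3 → ℝ) : Prop where
  re : TwiceDifferentiableAt ℝ (fun y => (f y).re) x
  imI : TwiceDifferentiableAt ℝ (fun y => (f y).imI) x
  imJ : TwiceDifferentiableAt ℝ (fun y => (f y).imJ) x
  imK : TwiceDifferentiableAt ℝ (fun y => (f y).imK) x

section QuaternionicCalculus

variable {p q u β : (Fin 3 → ℝ) → HC} {x : Fin 3 → ℝ}

theorem QDiffAt.const (c : HC) : QDiffAt (fun _ => c) x := by
  constructor <;> exact differentiableAt_const _

theorem QDiffAt.add (hp : QDiffAt p x) (hq : QDiffAt q x) : QDiffAt (fun y => p y + q y) x :=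
  ⟨hp.re.add hq.re, hp.imI.add hq.imI, hp.imJ.add hq.imJ, hp.imK.add hq.imK⟩

theorem QDiffAt.mul (hp : QDiffAt p x) (hq : QDiffAt q x) : QDiffAt (fun y => p y * q y) x := by
  obtain ⟨hp₀, hp₁, hp₂, hp₃⟩ := hp
  obtain ⟨hq₀, hq₁, hq₂, hq₃⟩ := hq
  constructor <;>
    simp only [Quaternion.re_mul, Quaternion.imI_mul, Quaternion.imJ_mul, Quaternion.imK_mul] <;>
    fun_prop

theorem QTwiceDiffAt.qDiffAt (hu : QTwiceDiffAt u x) : QDiffAt u x :=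
  ⟨hu.re.differentiableAt, hu.imI.differentiableAt, hu.imJ.differentiableAt,
    hu.imK.differentiableAt⟩

theorem QTwiceDiffAt.qDiffAt_pdq (hu : QTwiceDiffAt u x) (k : Fin 3) : QDiffAt (pdq k u) x :=
  ⟨differentiableAt_pd k hu.re, differentiableAt_pd k hu.imI, differentiableAt_pd k hu.imJ,
    differentiableAt_pd k hu.imK⟩

theorem QTwiceDiffAt.qDiffAt_Dq (hu : QTwiceDiffAt u x) : QDiffAt (Dq u) x :=
  have hdiff (e : HC) (k : Fin 3) : QDiffAt (fun y => e * pdq k u y) x :=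
    (QDiffAt.const e).mul (hu.qDiffAt_pdq k)
  ((hdiff e1 0).add (hdiff e2 1)).add (hdiff e3 2)

theorem pdq_add (k : Fin 3) (hp : QDiffAt p x) (hq : QDiffAt q x) :
    pdq k (fun y => p y + q y) x = pdq k p x + pdq k q x := by
  ext
  exacts [pd_add k hp.re hq.re, pd_add k hp.imI hq.imI, pd_add k hp.imJ hq.imJ,
    pd_add k hp.imK hq.imK]

theorem pdq_mul (k : Fin 3) (hp : QDiffAt p x) (hq : QDiffAt q x) :
    pdq k (fun y => p y * q y) x = pdq k p x * q x + p x * pdq k q x := by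
  obtain ⟨hp₀, hp₁, hp₂, hp₃⟩ := hp
  obtain ⟨hq₀, hq₁, hq₂, hq₃⟩ := hq
  ext <;>
    simp (disch := fun_prop) only [re_pdq, imI_pdq, imJ_pdq, imK_pdq, Quaternion.re_mul,
      Quaternion.imI_mul, Quaternion.imJ_mul, Quaternion.imK_mul, Quaternion.re_add,
      Quaternion.imI_add, Quaternion.imJ_add, Quaternion.imK_add, pd_add, pd_sub, pd_mul] <;>
    ring

theorem pdq_const_mul (k : Fin 3) (c : HC) (hq : QDiffAt q x) :
    pdq k (fun y => c * q y) x = c * pdq k q x := by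
  have hconst : pdq k (fun _ => c) x = 0 := by ext <;> exact pd_const k _
  rw [pdq_mul k (.const c) hq, hconst, zero_mul, zero_add]

theorem pdq_pdq_comm (j k : Fin 3) (hu : QTwiceDiffAt u x) :
    pdq j (pdq k u) x = pdq k (pdq j u) x := by
  ext
  exacts [pd_pd_comm j k hu.re, pd_pd_comm j k hu.imI, pd_pd_comm j k hu.imJ,
    pd_pd_comm j k hu.imK]

theorem pdq_Dq (k : Fin 3) (hu : QTwiceDiffAt u x) :
    pdq k (Dq u) x =
      e1 * pdq k (pdq 0 u) x + e2 * pdq k (pdq 1 u) x + e3 * pdq k (pdq 2 u) x := by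
  have hdiff (e : HC) (j : Fin 3) : QDiffAt (fun y => e * pdq j u y) x :=
    (QDiffAt.const e).mul (hu.qDiffAt_pdq j)
  have hmul (e : HC) (j : Fin 3) :
      pdq k (fun y => e * pdq j u y) x = e * pdq k (pdq j u) x :=
    pdq_const_mul k e (hu.qDiffAt_pdq j)
  unfold Dq
  rw [pdq_add k ((hdiff e1 0).add (hdiff e2 1)) (hdiff e3 2), pdq_add k (hdiff e1 0) (hdiff e2 1),
    hmul, hmul, hmul]

theorem lapq_eq_sum_pdq_pdq :
    lapq u x = pdq 0 (pdq 0 u) x + pdq 1 (pdq 1 u) x + pdq 2 (pdq 2 u) x :=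
  rfl

theorem Dq_Dq (hu : QTwiceDiffAt u x) : Dq (Dq u) x = -lapq u x := by
  rw [Dq, pdq_Dq 0 hu, pdq_Dq 1 hu, pdq_Dq 2 hu, pdq_pdq_comm 1 0 hu, pdq_pdq_comm 2 0 hu,
    pdq_pdq_comm 2 1 hu, lapq_eq_sum_pdq_pdq]
  simp only [mul_add, e1_mul_e1_mul, e2_mul_e2_mul, e3_mul_e3_mul, e2_mul_e1_mul, e3_mul_e1_mul,
    e3_mul_e2_mul]
  abel

theorem Dq_add (hp : QDiffAt p x) (hq : QDiffAt q x) :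
    Dq (fun y => p y + q y) x = Dq p x + Dq q x := by
  simp only [Dq, pdq_add _ hp hq, mul_add]
  abel

theorem Dq_mul (hp : QDiffAt p x) (hq : QDiffAt q x) :
    Dq (fun y => p y * q y) x = Dq p x * q x +
      (e1 * p x * pdq 0 q x + e2 * p x * pdq 1 q x + e3 * p x * pdq 2 q x) := by
  simp only [Dq, pdq_mul _ hp hq, mul_add, add_mul, mul_assoc]
  abel

theorem Dq_sub_mul_factorization (hu : QTwiceDiffAt u x) (hβ : QDiffAt β x) :
    Dq (fun y => Dq u y + u y * β y) x - (Dq u x + u x * β x) * β x =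
      -lapq u x + (e1 * u x * pdq 0 β x + e2 * u x * pdq 1 β x + e3 * u x * pdq 2 β x)
        - u x * (β x * β x) := by
  rw [Dq_add hu.qDiffAt_Dq (hu.qDiffAt.mul hβ), Dq_Dq hu, Dq_mul hu.qDiffAt hβ, add_mul,
    mul_assoc (u x)]
  abel

end QuaternionicCalculus

section Diagonal

variable {a1 a2 a3 : ℝ → ℂ} {x : Fin 3 → ℝ}

theorem qDiffAt_dal (ha1 : DifferentiableAt ℝ a1 (x 0)) (ha2 : DifferentiableAt ℝ a2 (x 1))
    (ha3 : DifferentiableAt ℝ a3 (x 2)) : QDiffAt (dal a1 a2 a3) x :=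
  ⟨differentiableAt_const _, differentiableAt_comp_apply 0 ha1,
    differentiableAt_comp_apply 1 ha2, differentiableAt_comp_apply 2 ha3⟩

theorem pdq_dal (k : Fin 3) (ha1 : DifferentiableAt ℝ a1 (x 0))
    (ha2 : DifferentiableAt ℝ a2 (x 1)) (ha3 : DifferentiableAt ℝ a3 (x 2)) :
    pdq k (dal a1 a2 a3) x =
      quat 0 (if 0 = k then deriv a1 (x 0) else 0) (if 1 = k then deriv a2 (x 1) else 0)
        (if 2 = k then deriv a3 (x 2) else 0) := by
  ext
  exacts [pd_const k 0, pd_comp_apply 0 k ha1, pd_comp_apply 1 k ha2, pd_comp_apply 2 k ha3]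

theorem dal_mul_self : dal a1 a2 a3 x * dal a1 a2 a3 x = quat (-sq3 a1 a2 a3 x) 0 0 0 := by
  ext <;> simp [dal, sq3] <;> ring

-- The coefficients are the involuted derivatives `Dα^{(k)} = w_k + α²`.
theorem units_mul_mul_pdq_dal (ha1 : DifferentiableAt ℝ a1 (x 0))
    (ha2 : DifferentiableAt ℝ a2 (x 1)) (ha3 : DifferentiableAt ℝ a3 (x 2)) (q : HC) :
    e1 * q * pdq 0 (dal a1 a2 a3) x + e2 * q * pdq 1 (dal a1 a2 a3) x +
        e3 * q * pdq 2 (dal a1 a2 a3) x =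
      quat ((wpot a1 a2 a3 0 x - sq3 a1 a2 a3 x) * q.re)
        ((wpot a1 a2 a3 1 x - sq3 a1 a2 a3 x) * q.imI)
        ((wpot a1 a2 a3 2 x - sq3 a1 a2 a3 x) * q.imJ)
        ((wpot a1 a2 a3 3 x - sq3 a1 a2 a3 x) * q.imK) := by
  simp only [pdq_dal _ ha1 ha2 ha3]
  ext <;> simp [wpot] <;> ring

theorem Dq_sub_mul_dal_eq_schrodinger {u0 u1 u2 u3 : (Fin 3 → ℝ) → ℂ}
    (ha1 : DifferentiableAt ℝ a1 (x 0)) (ha2 : DifferentiableAt ℝ a2 (x 1))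
    (ha3 : DifferentiableAt ℝ a3 (x 2))
    (hu0 : TwiceDifferentiableAt ℝ u0 x) (hu1 : TwiceDifferentiableAt ℝ u1 x)
    (hu2 : TwiceDifferentiableAt ℝ u2 x) (hu3 : TwiceDifferentiableAt ℝ u3 x) :
    let u : (Fin 3 → ℝ) → HC := fun y => quat (u0 y) (u1 y) (u2 y) (u3 y)
    let g : (Fin 3 → ℝ) → HC := fun y => Dq u y + u y * dal a1 a2 a3 y
    Dq g x - g x * dal a1 a2 a3 x =
      quat (-lap u0 x + wpot a1 a2 a3 0 x * u0 x) (-lap u1 x + wpot a1 a2 a3 1 x * u1 x)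
        (-lap u2 x + wpot a1 a2 a3 2 x * u2 x) (-lap u3 x + wpot a1 a2 a3 3 x * u3 x) := by
  intro u g
  have hu : QTwiceDiffAt u x := ⟨hu0, hu1, hu2, hu3⟩
  rw [Dq_sub_mul_factorization hu (qDiffAt_dal ha1 ha2 ha3), units_mul_mul_pdq_dal ha1 ha2 ha3,
    dal_mul_self]
  ext <;> simp [u] <;> ring

end Diagonal

theorem inhomogeneous_solvability_general
    (Ω : Set (Fin 3 → ℝ)) (a1 a2 a3 : ℝ → ℂ)
    (ha1 : ∀ x ∈ Ω, DifferentiableAt ℝ a1 (x 0)) (ha2 : ∀ x ∈ Ω, DifferentiableAt ℝ a2 (x 1))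
    (ha3 : ∀ x ∈ Ω, DifferentiableAt ℝ a3 (x 2))
    (f0 f1 f2 f3 : (Fin 3 → ℝ) → ℂ)
    (u0 u1 u2 u3 : (Fin 3 → ℝ) → ℂ)
    (hu0 : ∀ x ∈ Ω, TwiceDifferentiableAt ℝ u0 x) (hu1 : ∀ x ∈ Ω, TwiceDifferentiableAt ℝ u1 x)
    (hu2 : ∀ x ∈ Ω, TwiceDifferentiableAt ℝ u2 x) (hu3 : ∀ x ∈ Ω, TwiceDifferentiableAt ℝ u3 x)
    (heq0 : ∀ x ∈ Ω, -lap u0 x + wpot a1 a2 a3 0 x * u0 x = f0 x)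
    (heq1 : ∀ x ∈ Ω, -lap u1 x + wpot a1 a2 a3 1 x * u1 x = f1 x)
    (heq2 : ∀ x ∈ Ω, -lap u2 x + wpot a1 a2 a3 2 x * u2 x = f2 x)
    (heq3 : ∀ x ∈ Ω, -lap u3 x + wpot a1 a2 a3 3 x * u3 x = f3 x) :
    let u : (Fin 3 → ℝ) → HC := fun y => quat (u0 y) (u1 y) (u2 y) (u3 y)
    let g : (Fin 3 → ℝ) → HC := fun y => Dq u y + u y * dal a1 a2 a3 y
    ∀ x ∈ Ω, Dq g x - g x * dal a1 a2 a3 x = quat (f0 x) (f1 x) (f2 x) (f3 x) := by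
  intro u g x hx
  rw [← heq0 x hx, ← heq1 x hx, ← heq2 x hx, ← heq3 x hx]
  exact Dq_sub_mul_dal_eq_schrodinger (ha1 x hx) (ha2 x hx) (ha3 x hx) (hu0 x hx) (hu1 x hx)
    (hu2 x hx) (hu3 x hx)

/-- constructive content of Proposition exist: if `u_k` solve the
inhomogeneous Schrödinger equations `−Δu_k + w_k u_k = f_k`, then `g = (D + M^α)u`
solves the inhomogeneous equation `Dg − gα = f`. -/
theorem inhomogeneous_solvability
    (Ω : Set (Fin 3 → ℝ)) (hΩ : IsOpen Ω)
    (a1 a2 a3 : ℝ → ℂ)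
    (ha1 : ContDiff ℝ 1 a1) (ha2 : ContDiff ℝ 1 a2) (ha3 : ContDiff ℝ 1 a3)
    (f0 f1 f2 f3 : (Fin 3 → ℝ) → ℂ)
    (u0 u1 u2 u3 : (Fin 3 → ℝ) → ℂ)
    (hu0 : ContDiffOn ℝ 2 u0 Ω) (hu1 : ContDiffOn ℝ 2 u1 Ω)
    (hu2 : ContDiffOn ℝ 2 u2 Ω) (hu3 : ContDiffOn ℝ 2 u3 Ω)
    (heq0 : ∀ x ∈ Ω, -lap u0 x + wpot a1 a2 a3 0 x * u0 x = f0 x)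
    (heq1 : ∀ x ∈ Ω, -lap u1 x + wpot a1 a2 a3 1 x * u1 x = f1 x)
    (heq2 : ∀ x ∈ Ω, -lap u2 x + wpot a1 a2 a3 2 x * u2 x = f2 x)
    (heq3 : ∀ x ∈ Ω, -lap u3 x + wpot a1 a2 a3 3 x * u3 x = f3 x) :
    (let u : (Fin 3 → ℝ) → HC := fun y => quat (u0 y) (u1 y) (u2 y) (u3 y)
     let g : (Fin 3 → ℝ) → HC := fun y => Dq u y + u y * dal a1 a2 a3 y
     ∀ x ∈ Ω, Dq g x - g x * dal a1 a2 a3 x = quat (f0 x) (f1 x) (f2 x) (f3 x)) := by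
  have htwice {v : (Fin 3 → ℝ) → ℂ} (hv : ContDiffOn ℝ 2 v Ω) (x : Fin 3 → ℝ) (hx : x ∈ Ω) :
      TwiceDifferentiableAt ℝ v x :=
    .of_contDiffAt (hv.contDiffAt (hΩ.mem_nhds hx))
  exact inhomogeneous_solvability_general Ω a1 a2 a3
    (fun _ _ => ha1.differentiable one_ne_zero _) (fun _ _ => ha2.differentiable one_ne_zero _)
    (fun _ _ => ha3.differentiable one_ne_zero _) f0 f1 f2 f3 u0 u1 u2 u3
    (htwice hu0) (htwice hu1) (htwice hu2) (htwice hu3) heq0 heq1 heq2 heq3
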